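/- Let f be a bounded measurable function on ℝ^m with compact support, and suppose f satisfies the balance law at a point x ∈ ℝ^m, i.e. for almost every r ≥ 0, ∫_{S^{m−1}} f(x + r v) v dσ(v) = 0. Then (∫_{ℝ^m} f(z) dz) · x = ∫_{ℝ^m} f(z) z dz. Consequently: (1) if the mass ∫_{ℝ^m} f(z) dz ≠ 0, then x is the centroid of f, namely x = (∫ f(z) z dz)/(∫ f(z) dz), so the centroid is the unique candidate for a stationary critical point of Pf(·,h); (2) if ∫_{ℝ^m} f(z) dz = 0 and ∫_{ℝ^m} f(z) z dz ≠ 0, then no point x satisfies the balance law for f. -/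

import Mathlib

/-!
In polar coordinates centred at `x`, the vector `∫ f z • (z - x) dz` is a weighted integral over
`r > 0` of the spherical integrals in the balance law, so it vanishes, i.e.
`(∫ f z dz) • x = ∫ f z • z dz`. Polar integration naturally uses the cone measure on the unit
sphere, whereas the balance law uses the Hausdorff measure. Both are invariant under linear
isometries, hence uniformly distributed on the sphere, and by Besicovitch differentiation two
measures with this property are proportional.
-/

open MeasureTheory Metric Set

noncomputable section

/-- `f` satisfies the balance law at the point `x`: for almost every `r ≥ 0`, the
vector-valued integral of `f(x + r v) • v` over the unit sphere (with respect to the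
surface, i.e. `(m-1)`-dimensional Hausdorff, measure) vanishes. -/
def BalanceLawAt {m : ℕ} (f : EuclideanSpace ℝ (Fin m) → ℝ)
    (x : EuclideanSpace ℝ (Fin m)) : Prop :=
  ∀ᵐ r ∂(volume.restrict (Ici (0 : ℝ))),
    (∫ v in sphere (0 : EuclideanSpace ℝ (Fin m)) 1,
      f (x + r • v) • v ∂(μH[(m : ℝ) - 1])) = 0

open Filter Topology Module
open scoped ENNReal NNReal Pointwise

section UniformlyDistributed

/-- A measure `μ` is uniformly distributed on a set `S`, in the sense of geometric measure theory,
if closed balls of equal radius with centers in `S` have equal measure. On a given set such measures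
are unique up to a scalar. The measure is not required to be concentrated on `S`. -/
def UniformlyDistributedOn {α : Type*} [PseudoMetricSpace α] [MeasurableSpace α]
    (μ : Measure α) (S : Set α) : Prop :=
  ∀ x ∈ S, ∀ y ∈ S, ∀ r, μ (closedBall x r) = μ (closedBall y r)

namespace UniformlyDistributedOn

theorem add {α : Type*} [PseudoMetricSpace α] [MeasurableSpace α] {μ ν : Measure α} {S : Set α}
    (hμ : UniformlyDistributedOn μ S) (hν : UniformlyDistributedOn ν S) :
    UniformlyDistributedOn (μ + ν) S := fun x hx y hy r => by
  rw [Measure.add_apply, Measure.add_apply, hμ x hx y hy r, hν x hx y hy r]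

variable {α : Type*} [MetricSpace α] [SecondCountableTopology α] [HasBesicovitchCovering α]
  [MeasurableSpace α] [BorelSpace α] {μ ν : Measure α} {S : Set α}

theorem exists_eq_smul_of_absolutelyContinuous [IsLocallyFiniteMeasure μ]
    [IsLocallyFiniteMeasure ν] (hμ : UniformlyDistributedOn μ S)
    (hν : UniformlyDistributedOn ν S) (hνS : ∀ᵐ x ∂ν, x ∈ S) (hμν : μ ≪ ν) :
    ∃ c : ℝ≥0, μ = c • ν := by
  rcases eq_or_ne ν 0 with rfl | hν0
  · exact ⟨0, by simpa using Measure.absolutelyContinuous_zero_iff.1 hμν⟩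
  have : NeZero ν := ⟨hν0⟩
  have hlim := (Besicovitch.ae_tendsto_rnDeriv μ ν).and hνS
  obtain ⟨x, ⟨hx, hxS⟩, hx_top⟩ := (hlim.and (Measure.rnDeriv_ne_top μ ν)).exists
  have hconst : μ.rnDeriv ν =ᵐ[ν] fun _ => μ.rnDeriv ν x := by
    filter_upwards [hlim] with y ⟨hy, hyS⟩
    refine tendsto_nhds_unique hy (hx.congr fun r => ?_)
    rw [hμ x hxS y hyS, hν x hxS y hyS]
  refine ⟨(μ.rnDeriv ν x).toNNReal, ?_⟩
  calc μ = ν.withDensity (μ.rnDeriv ν) := (Measure.withDensity_rnDeriv_eq μ ν hμν).symm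
    _ = μ.rnDeriv ν x • ν := by rw [withDensity_congr_ae hconst, withDensity_const]
    _ = (μ.rnDeriv ν x).toNNReal • ν := by
      rw [ENNReal.smul_def, ENNReal.coe_toNNReal hx_top]

theorem exists_eq_smul [IsFiniteMeasure μ] [IsFiniteMeasure ν]
    (hμ : UniformlyDistributedOn μ S) (hν : UniformlyDistributedOn ν S)
    (hμS : ∀ᵐ x ∂μ, x ∈ S) (hνS : ∀ᵐ x ∂ν, x ∈ S) (hν0 : ν ≠ 0) :
    ∃ c : ℝ≥0, μ = c • ν := by
  have hS : ∀ᵐ x ∂(μ + ν), x ∈ S := ae_add_measure_iff.2 ⟨hμS, hνS⟩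
  obtain ⟨a, ha⟩ := hμ.exists_eq_smul_of_absolutelyContinuous (hμ.add hν) hS
    (Measure.AbsolutelyContinuous.rfl.add_right ν)
  obtain ⟨b, hb⟩ := hν.exists_eq_smul_of_absolutelyContinuous (hμ.add hν) hS
    (Measure.AbsolutelyContinuous.rfl.add_right' μ)
  have hb0 : b ≠ 0 := by
    rintro rfl
    exact hν0 (by rw [hb, zero_smul])
  have hsum : μ + ν = b⁻¹ • ν := by
    conv_rhs => rw [hb]
    rw [inv_smul_smul₀ hb0]
  exact ⟨a * b⁻¹, by rw [mul_smul, ← hsum, ← ha]⟩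

end UniformlyDistributedOn

end UniformlyDistributed

section IsometryInvariant

variable {E : Type*} [NormedAddCommGroup E] [InnerProductSpace ℝ E]

theorem exists_linearIsometryEquiv_apply_eq {x y : E} (h : ‖x‖ = ‖y‖) :
    ∃ e : E ≃ₗᵢ[ℝ] E, e x = y :=
  ⟨(ℝ ∙ (x - y))ᗮ.reflection, Submodule.reflection_sub h⟩

variable [MeasurableSpace E] [BorelSpace E]

theorem uniformlyDistributedOn_sphere_of_measurePreserving {μ : Measure E}
    (hμ : ∀ e : E ≃ₗᵢ[ℝ] E, MeasurePreserving e μ μ) (R : ℝ) :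
    UniformlyDistributedOn μ (sphere 0 R) := by
  intro x hx y hy r
  obtain ⟨e, rfl⟩ := exists_linearIsometryEquiv_apply_eq (x := x) (y := y) (by simp_all)
  rw [← e.isometry.preimage_closedBall,
    (hμ e).measure_preimage measurableSet_closedBall.nullMeasurableSet]

theorem measurePreserving_hausdorffMeasure_restrict_sphere (e : E ≃ₗᵢ[ℝ] E) (d R : ℝ) :
    MeasurePreserving e ((μH[d] : Measure E).restrict (sphere 0 R))
      ((μH[d] : Measure E).restrict (sphere 0 R)) := by
  have h := (e.toIsometryEquiv.measurePreserving_hausdorffMeasure d).restrict_preimage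
    (s := sphere (0 : E) R) isClosed_sphere.measurableSet
  simpa [e.preimage_sphere] using h

end IsometryInvariant

section HausdorffMeasureSphere

theorem hausdorffMeasure_image_lt_top_of_locallyLipschitz {X Y : Type*} [MetricSpace X]
    [MeasurableSpace X] [BorelSpace X] [MetricSpace Y] [MeasurableSpace Y] [BorelSpace Y]
    {f : X → Y} {s : Set X} {d : ℝ} (hf : LocallyLipschitz f) (hs : IsCompact s) (hd : 0 ≤ d)
    (hsd : μH[d] s < ∞) : μH[d] (f '' s) < ∞ := by
  obtain ⟨K, hK⟩ := hf.locallyLipschitzOn.exists_lipschitzOnWith_of_compact hs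
  exact (hK.hausdorffMeasure_image_le hd).trans_lt
    (ENNReal.mul_lt_top (by simp [ENNReal.rpow_lt_top_of_nonneg hd]) hsd)

section Hemisphere

variable {E : Type*} [NormedAddCommGroup E] [InnerProductSpace ℝ E] {v : E}

theorem norm_stereoToFun_le_of_inner_nonpos {x : E} (h : inner ℝ v x ≤ 0) :
    ‖stereoToFun v x‖ ≤ 2 * ‖x‖ := by
  have hden : 1 ≤ 1 - inner ℝ v x := by linarith
  have hcoef : |2 / (1 - inner ℝ v x)| ≤ 2 := by
    rw [abs_of_nonneg (by positivity)]
    exact div_le_self zero_le_two hden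
  rw [stereoToFun_apply, norm_smul, innerSL_apply_apply, Real.norm_eq_abs]
  gcongr
  exact (ℝ ∙ v)ᗮ.norm_orthogonalProjectionOnto_apply_le x

theorem hemisphere_subset_image_stereoInvFunAux (hv : ‖v‖ = 1) :
    {x ∈ sphere (0 : E) 1 | inner ℝ v x ≤ 0} ⊆
      (fun w : (ℝ ∙ v)ᗮ => stereoInvFunAux v w) '' closedBall 0 2 := by
  rintro x ⟨hx, hvx⟩
  have hxv : x ≠ v := by
    rintro rfl
    norm_num [hv] at hvx
  refine ⟨stereoToFun v x, ?_,
    congrArg Subtype.val (stereo_left_inv hv (x := ⟨x, hx⟩) hxv)⟩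
  simpa [mem_sphere_zero_iff_norm.1 hx] using norm_stereoToFun_le_of_inner_nonpos hvx

theorem ball_subset_image_orthogonalProjectionOnto_sphere (hv : ‖v‖ = 1) :
    ball (0 : (ℝ ∙ v)ᗮ) 1 ⊆ (ℝ ∙ v)ᗮ.orthogonalProjectionOnto '' sphere 0 1 := by
  intro w hw
  have hw1 : ‖(w : E)‖ < 1 := by simpa using hw
  have hwv : inner ℝ (w : E) v = 0 := Submodule.mem_orthogonal_singleton_iff_inner_left.1 w.2
  have hnn : 0 ≤ 1 - ‖(w : E)‖ ^ 2 := by nlinarith [norm_nonneg (w : E)]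
  refine ⟨w + √(1 - ‖(w : E)‖ ^ 2) • v, ?_, ?_⟩
  · rw [mem_sphere_zero_iff_norm, ← sq_eq_sq₀ (norm_nonneg _) zero_le_one, norm_add_sq_real,
      inner_smul_right, hwv, norm_smul, hv, mul_one, Real.norm_eq_abs, sq_abs, Real.sq_sqrt hnn]
    ring
  · have hPv : (ℝ ∙ v)ᗮ.orthogonalProjectionOnto v = 0 :=
      Submodule.orthogonalProjectionOnto_orthogonal_apply_eq_zero
        (Submodule.mem_span_singleton_self v)
    rw [map_add, map_smul, hPv, smul_zero, add_zero,
      Submodule.orthogonalProjectionOnto_mem_subspace_eq_self]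

end Hemisphere

variable {E : Type*} [NormedAddCommGroup E] [InnerProductSpace ℝ E] [MeasurableSpace E]
  [BorelSpace E] {n : ℕ} [Fact (finrank ℝ E = n + 1)]

theorem hausdorffMeasure_hemisphere_lt_top {v : E} (hv : ‖v‖ = 1) :
    μH[n] {x ∈ sphere (0 : E) 1 | inner ℝ v x ≤ 0} < ∞ := by
  have : FiniteDimensional ℝ E := .of_fact_finrank_eq_succ n
  have hfin : finrank ℝ (ℝ ∙ v)ᗮ = n :=
    Submodule.finrank_orthogonal_span_singleton (norm_ne_zero_iff.1 (hv ▸ one_ne_zero))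
  have hsmooth : ContDiff ℝ 1 fun w : (ℝ ∙ v)ᗮ => stereoInvFunAux v w :=
    contDiff_stereoInvFunAux.comp (ℝ ∙ v)ᗮ.subtypeL.contDiff
  refine (measure_mono (hemisphere_subset_image_stereoInvFunAux hv)).trans_lt ?_
  refine hausdorffMeasure_image_lt_top_of_locallyLipschitz hsmooth.locallyLipschitz
    (isCompact_closedBall 0 2) n.cast_nonneg ?_
  rw [← hfin]
  exact measure_closedBall_lt_top

variable (E n) in
theorem hausdorffMeasure_sphere_lt_top : μH[n] (sphere (0 : E) 1) < ∞ := by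
  have : Nontrivial E := nontrivial_of_finrank_eq_succ (Fact.out : finrank ℝ E = n + 1)
  obtain ⟨v, hv⟩ := exists_norm_eq E zero_le_one
  have hcover : sphere (0 : E) 1 ⊆
      {x ∈ sphere (0 : E) 1 | inner ℝ v x ≤ 0} ∪ {x ∈ sphere (0 : E) 1 | inner ℝ (-v) x ≤ 0} :=
    fun x hx => (le_total (inner ℝ v x) 0).imp (⟨hx, ·⟩) fun h => ⟨hx, by simpa using h⟩
  exact (measure_mono hcover).trans_lt <| measure_union_lt_top
    (hausdorffMeasure_hemisphere_lt_top hv)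
    (hausdorffMeasure_hemisphere_lt_top (by rwa [norm_neg]))

variable (E n) in
theorem hausdorffMeasure_sphere_pos : 0 < μH[n] (sphere (0 : E) 1) := by
  have : FiniteDimensional ℝ E := .of_fact_finrank_eq_succ n
  have : Nontrivial E := nontrivial_of_finrank_eq_succ (Fact.out : finrank ℝ E = n + 1)
  obtain ⟨v, hv⟩ := exists_norm_eq E zero_le_one
  have hfin : finrank ℝ (ℝ ∙ v)ᗮ = n :=
    Submodule.finrank_orthogonal_span_singleton (norm_ne_zero_iff.1 (hv ▸ one_ne_zero))
  calc 0 < μH[n] (ball (0 : (ℝ ∙ v)ᗮ) 1) := by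
        rw [← hfin]
        exact measure_ball_pos _ _ one_pos
    _ ≤ μH[n] ((ℝ ∙ v)ᗮ.orthogonalProjectionOnto '' sphere (0 : E) 1) :=
        measure_mono (ball_subset_image_orthogonalProjectionOnto_sphere hv)
    _ ≤ μH[n] (sphere (0 : E) 1) :=
        hausdorffMeasure_orthogonalProjectionOnto_le _ _ _ n.cast_nonneg

variable (n) in
theorem exists_eq_smul_hausdorffMeasure_restrict_sphere {μ : Measure E} [IsFiniteMeasure μ]
    (hμ : ∀ e : E ≃ₗᵢ[ℝ] E, MeasurePreserving e μ μ) (hμS : ∀ᵐ x ∂μ, x ∈ sphere (0 : E) 1) :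
    ∃ c : ℝ≥0, μ = c • (μH[n] : Measure E).restrict (sphere 0 1) := by
  have : FiniteDimensional ℝ E := .of_fact_finrank_eq_succ n
  have : IsFiniteMeasure ((μH[n] : Measure E).restrict (sphere 0 1)) :=
    isFiniteMeasure_restrict.2 (hausdorffMeasure_sphere_lt_top E n).ne
  refine (uniformlyDistributedOn_sphere_of_measurePreserving hμ 1).exists_eq_smul
    (uniformlyDistributedOn_sphere_of_measurePreserving
      (measurePreserving_hausdorffMeasure_restrict_sphere · n 1) 1)
    hμS (ae_restrict_mem isClosed_sphere.measurableSet) ?_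
  rw [Ne, Measure.restrict_eq_zero]
  exact (hausdorffMeasure_sphere_pos E n).ne'

end HausdorffMeasureSphere

section ConeMeasure

variable {E : Type*} [NormedAddCommGroup E] [NormedSpace ℝ E]

theorem linearIsometryEquiv_preimage_smul_sphere_inter (e : E ≃ₗᵢ[ℝ] E) (t : Set ℝ) (R : ℝ)
    (s : Set E) : e ⁻¹' (t • (sphere 0 R ∩ s)) = t • (sphere 0 R ∩ e ⁻¹' s) := by
  have himage (u : Set E) : e ⁻¹' u = e.symm '' u := (e.symm.image_eq_preimage_symm u).symm
  calc e ⁻¹' (t • (sphere 0 R ∩ s)) = t • e ⁻¹' (sphere 0 R ∩ s) := by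
        rw [himage, himage]
        exact image_image2_distrib_right fun r x => map_smul e.symm r x
    _ = t • (sphere 0 R ∩ e ⁻¹' s) := by rw [preimage_inter, e.preimage_sphere, map_zero]

variable [MeasurableSpace E]

/-- The cone measure of the unit sphere: the measure `μ.toSphere` of the polar decomposition of `μ`,
regarded as a measure on the ambient space so that it can be compared with Hausdorff measures. -/
def coneMeasure (μ : Measure E) : Measure E :=
  μ.toSphere.map (↑)

variable [BorelSpace E]

theorem coneMeasure_apply (μ : Measure E) {s : Set E} (hs : MeasurableSet s) :
    coneMeasure μ s = finrank ℝ E * μ (Ioo (0 : ℝ) 1 • (sphere 0 1 ∩ s)) := by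
  rw [coneMeasure, Measure.map_apply measurable_subtype_coe hs,
    Measure.toSphere_apply' _ (measurable_subtype_coe hs), Subtype.image_preimage_coe]

theorem ae_coneMeasure_mem_sphere (μ : Measure E) :
    ∀ᵐ x ∂(coneMeasure μ), x ∈ sphere (0 : E) 1 :=
  (ae_map_iff measurable_subtype_coe.aemeasurable isClosed_sphere.measurableSet).2
    (ae_of_all _ Subtype.property)

theorem measurePreserving_coneMeasure {μ : Measure E} {e : E ≃ₗᵢ[ℝ] E}
    (he : MeasurePreserving e μ μ) : MeasurePreserving e (coneMeasure μ) (coneMeasure μ) := by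
  refine ⟨he.measurable, Measure.ext fun s hs => ?_⟩
  rw [Measure.map_apply he.measurable hs, coneMeasure_apply μ hs,
    coneMeasure_apply μ (he.measurable hs), ← linearIsometryEquiv_preimage_smul_sphere_inter,
    he.measure_preimage_emb e.toHomeomorph.measurableEmbedding]

theorem integral_volumeIoiPow {F : Type*} [NormedAddCommGroup F] [NormedSpace ℝ F] (n : ℕ)
    (g : ℝ → F) : ∫ r, g r.1 ∂(Measure.volumeIoiPow n) = ∫ r in Ioi (0 : ℝ), r ^ n • g r := by
  have hmeas : Measurable fun r : Ioi (0 : ℝ) => (r.1 ^ n).toNNReal :=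
    (measurable_subtype_coe.pow_const n).real_toNNReal
  calc ∫ r, g r.1 ∂(Measure.volumeIoiPow n)
      = ∫ r : Ioi (0 : ℝ), (r.1 ^ n).toNNReal • g r ∂(volume.comap Subtype.val) :=
        integral_withDensity_eq_integral_smul hmeas _
    _ = ∫ r in Ioi (0 : ℝ), (r ^ n).toNNReal • g r :=
        integral_subtype_comap measurableSet_Ioi fun r => (r ^ n).toNNReal • g r
    _ = ∫ r in Ioi (0 : ℝ), r ^ n • g r := by
        refine setIntegral_congr_fun measurableSet_Ioi fun r hr => ?_
        rw [NNReal.smul_def, Real.coe_toNNReal _ (pow_nonneg (mem_Ioi.1 hr).le n)]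

section Polar

variable [FiniteDimensional ℝ E] (μ : Measure E) [μ.IsAddHaarMeasure]

instance isFiniteMeasure_coneMeasure : IsFiniteMeasure (coneMeasure μ) := by
  unfold coneMeasure
  infer_instance

variable [Nontrivial E]

theorem measurePreserving_smul_toSphere_prod_volumeIoiPow :
    MeasurePreserving (fun p : sphere (0 : E) 1 × Ioi (0 : ℝ) => p.2.1 • p.1.1)
      (μ.toSphere.prod (Measure.volumeIoiPow (finrank ℝ E - 1))) μ := by
  have hsymm := μ.measurePreserving_homeomorphUnitSphereProd.symm
    (homeomorphUnitSphereProd E).toMeasurableEquiv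
  have hcoe : MeasurePreserving ((↑) : ({0}ᶜ : Set E) → E) (μ.comap (↑)) μ := by
    simpa only [restrict_compl_singleton] using
      measurePreserving_subtype_coe (μa := μ) (measurableSet_singleton (0 : E)).compl
  exact hcoe.comp hsymm

variable {F : Type*} [NormedAddCommGroup F] [NormedSpace ℝ F]

theorem integral_eq_integral_Ioi_integral_coneMeasure {g : E → F} (hg : Integrable g μ) :
    ∫ z, g z ∂μ =
      ∫ r in Ioi (0 : ℝ), r ^ (finrank ℝ E - 1) • ∫ v, g (r • v) ∂(coneMeasure μ) := by
  have hpolar := measurePreserving_smul_toSphere_prod_volumeIoiPow μ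
  have hcone (r : ℝ) : ∫ v, g (r • v) ∂(coneMeasure μ) = ∫ v, g (r • v.1) ∂μ.toSphere :=
    (MeasurableEmbedding.subtype_coe isClosed_sphere.measurableSet).integral_map _
  calc ∫ z, g z ∂μ
      = ∫ p, g (p.2.1 • p.1.1) ∂(μ.toSphere.prod (Measure.volumeIoiPow (finrank ℝ E - 1))) := by
        conv_lhs => rw [← hpolar.map_eq]
        exact integral_map hpolar.aemeasurable (by rw [hpolar.map_eq]; exact hg.1)
    _ = ∫ r, ∫ v, g (r.1 • v.1) ∂μ.toSphere ∂(Measure.volumeIoiPow (finrank ℝ E - 1)) :=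
        integral_prod_symm _ (hpolar.integrable_comp_of_integrable hg)
    _ = ∫ r in Ioi (0 : ℝ), r ^ (finrank ℝ E - 1) • ∫ v, g (r • v) ∂(coneMeasure μ) := by
        simp_rw [hcone]
        exact integral_volumeIoiPow _ fun r => ∫ v, g (r • v.1) ∂μ.toSphere

end Polar

end ConeMeasure

section HausdorffPolar

variable {E F : Type*} [NormedAddCommGroup E] [InnerProductSpace ℝ E] [FiniteDimensional ℝ E]
  [MeasurableSpace E] [BorelSpace E] [NormedAddCommGroup F] [NormedSpace ℝ F]

variable (E) in
theorem exists_coneMeasure_volume_eq_smul_hausdorffMeasure (n : ℕ) [Fact (finrank ℝ E = n + 1)] :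
    ∃ c : ℝ≥0, coneMeasure (volume : Measure E) = c • (μH[n] : Measure E).restrict (sphere 0 1) :=
  exists_eq_smul_hausdorffMeasure_restrict_sphere (E := E) n
    (fun e => measurePreserving_coneMeasure e.measurePreserving) (ae_coneMeasure_mem_sphere _)

theorem integral_eq_zero_of_ae_integral_sphere_eq_zero (n : ℕ) [Fact (finrank ℝ E = n + 1)]
    {g : E → F} (hg : Integrable g)
    (h : ∀ᵐ r ∂(volume.restrict (Ioi (0 : ℝ))), ∫ v in sphere (0 : E) 1, g (r • v) ∂μH[n] = 0) :
    ∫ z, g z = 0 := by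
  have : Nontrivial E := nontrivial_of_finrank_eq_succ (Fact.out : finrank ℝ E = n + 1)
  obtain ⟨c, hc⟩ := exists_coneMeasure_volume_eq_smul_hausdorffMeasure E n
  rw [integral_eq_integral_Ioi_integral_coneMeasure volume hg]
  refine integral_eq_zero_of_ae ?_
  filter_upwards [h] with r hr
  rw [hc, integral_smul_nnreal_measure, hr, smul_zero, smul_zero, Pi.zero_apply]

end HausdorffPolar

theorem integrable_of_locallyIntegrable_of_hasCompactSupport {X F : Type*} [TopologicalSpace X]
    [MeasurableSpace X] [NormedAddCommGroup F] {μ : Measure X} {f : X → F}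
    (hf : LocallyIntegrable f μ) (hsupp : HasCompactSupport f) : Integrable f μ :=
  (integrableOn_iff_integrable_of_support_subset (subset_tsupport f)).1
    (hf.integrableOn_isCompact hsupp.isCompact)

theorem integral_comp_add_smul {E : Type*} [NormedAddCommGroup E] [NormedSpace ℝ E]
    [CompleteSpace E] [MeasurableSpace E] [MeasurableAdd E] {μ : Measure E}
    [μ.IsAddLeftInvariant] {f : E → ℝ}
    (hf : Integrable f μ) (hfz : Integrable (fun z => f z • z) μ) (x : E) :
    ∫ z, f (x + z) • z ∂μ = ∫ z, f z • z ∂μ - (∫ z, f z ∂μ) • x :=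
  calc ∫ z, f (x + z) • z ∂μ = ∫ z, f (x + z) • ((x + z) - x) ∂μ := by
        simp only [add_sub_cancel_left]
    _ = ∫ z, f z • (z - x) ∂μ := integral_add_left_eq_self (fun z => f z • (z - x)) x
    _ = ∫ z, f z • z ∂μ - (∫ z, f z ∂μ) • x := by
        simp only [smul_sub]
        rw [integral_sub hfz (hf.smul_const x), integral_smul_const]

theorem BalanceLawAt.integral_smul_eq {m : ℕ} {f : EuclideanSpace ℝ (Fin m) → ℝ}
    {x : EuclideanSpace ℝ (Fin m)} (hx : BalanceLawAt f x) (hf : Integrable f)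
    (hfz : Integrable fun z => f z • z) : (∫ z, f z) • x = ∫ z, f z • z := by
  rcases m with _ | n
  · exact Subsingleton.elim _ _
  have : Fact (finrank ℝ (EuclideanSpace ℝ (Fin (n + 1))) = n + 1) := ⟨finrank_euclideanSpace_fin⟩
  have hint : Integrable fun z => f (x + z) • z := by
    simpa [smul_sub] using (hfz.sub (hf.smul_const x)).comp_add_left x
  have hsphere : ∀ᵐ r ∂(volume.restrict (Ioi (0 : ℝ))),
      ∫ v in sphere (0 : EuclideanSpace ℝ (Fin (n + 1))) 1, f (x + r • v) • r • v ∂μH[n] = 0 := by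
    filter_upwards [ae_restrict_of_ae_restrict_of_subset Ioi_subset_Ici_self hx] with r hr
    rw [Nat.cast_succ, add_sub_cancel_right] at hr
    simp only [smul_comm _ r]
    rw [integral_smul, hr, smul_zero]
  have hzero := integral_eq_zero_of_ae_integral_sphere_eq_zero n hint hsphere
  rw [integral_comp_add_smul hf hfz x] at hzero
  exact (sub_eq_zero.1 hzero).symm

theorem stmt4_general {m : ℕ} (f : EuclideanSpace ℝ (Fin m) → ℝ) (hf : Integrable f)
    (hfz : Integrable fun z => f z • z) :
    (∀ x : EuclideanSpace ℝ (Fin m), BalanceLawAt f x →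
      ((∫ z, f z) • x = ∫ z, f z • z) ∧
      ((∫ z, f z) ≠ 0 → x = (∫ z, f z)⁻¹ • ∫ z, f z • z)) ∧
    (((∫ z, f z) = 0 ∧ (∫ z, f z • z) ≠ 0) →
      ¬ ∃ x : EuclideanSpace ℝ (Fin m), BalanceLawAt f x) := by
  refine ⟨fun x hx => ?_, fun ⟨hmass, hmoment⟩ ⟨x, hx⟩ => hmoment ?_⟩
  · have key := hx.integral_smul_eq hf hfz
    exact ⟨key, fun hmass => (eq_inv_smul_iff₀ hmass).2 key⟩
  · rw [← hx.integral_smul_eq hf hfz, hmass, zero_smul]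

theorem stmt4 {m : ℕ} (f : EuclideanSpace ℝ (Fin m) → ℝ)
    (hmeas : Measurable f) (hbdd : ∃ C : ℝ, ∀ x, |f x| ≤ C)
    (hsupp : HasCompactSupport f) :
    (∀ x : EuclideanSpace ℝ (Fin m), BalanceLawAt f x →
      ((∫ z, f z) • x = ∫ z, f z • z) ∧
      ((∫ z, f z) ≠ 0 → x = (∫ z, f z)⁻¹ • ∫ z, f z • z)) ∧
    (((∫ z, f z) = 0 ∧ (∫ z, f z • z) ≠ 0) →
      ¬ ∃ x : EuclideanSpace ℝ (Fin m), BalanceLawAt f x) := by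
  obtain ⟨C, hC⟩ := hbdd
  have hloc : LocallyIntegrable f :=
    (memLp_top_of_bound hmeas.aestronglyMeasurable C (ae_of_all _ hC)).locallyIntegrable le_top
  exact stmt4_general f (integrable_of_locallyIntegrable_of_hasCompactSupport hloc hsupp)
    (integrable_of_locallyIntegrable_of_hasCompactSupport (hloc.smul_continuous continuous_id)
      hsupp.smul_right)
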